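/- Let f be a multicritical circle map with irrational rotation number and return times q_n. There exists a constant C_3 > 1 depending only on f such that for all n ≥ 0 and all x ∈ S^1, C_3^{−1}|x − f^{−q_n}(x)| ≤ |f^{q_n}(x) − x| ≤ C_3|x − f^{−q_n}(x)|, where |u − v| denotes the length of the arc between u and v not containing any other of the three points x, f^{q_n}(x), f^{−q_n}(x). -/

import Mathlib

open Set Filter MeasureTheory

noncomputable section

/-- The Schwarzian derivative `Sf = (f''/f')' - (1/2) (f''/f')^2`. -/
def schwarzianDeriv (f : ℝ → ℝ) (x : ℝ) : ℝ :=
  deriv (fun y => deriv (deriv f) y / deriv f y) x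
    - (1 / 2) * (deriv (deriv f) x / deriv f x) ^ 2

/-- A multicritical circle map, described through its lift `F : ℝ → ℝ` to the real line.
It is an orientation-preserving `C^3` circle homeomorphism with finitely many critical
points `c 0, …, c (N-1)`, each of non-flat power-law type: near `c i` the derivative is
pinched between two multiples of `|x - c i| ^ (s i - 1)` with `s i > 1`, the Schwarzian
derivative is negative on a punctured neighborhood of each critical point, and
`log (F')` has bounded variation (bounded by `v`) off the critical neighborhoods. -/
structure MCM where
  /-- the lift of the circle map -/
  F : ℝ → ℝ
  smooth : ContDiff ℝ 3 F
  mono : StrictMono F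
  deg1 : ∀ x, F (x + 1) = F x + 1
  /-- number of critical points -/
  N : ℕ
  N_pos : 0 < N
  /-- the critical points (one representative in `[0,1)` for each) -/
  c : Fin N → ℝ
  c_mem : ∀ i, c i ∈ Set.Ico (0 : ℝ) 1
  c_inj : Function.Injective c
  isCrit : ∀ i, deriv F (c i) = 0
  critOnly : ∀ x, deriv F x = 0 → ∃ (i : Fin N) (k : ℤ), x = c i + (k : ℝ)
  /-- neighborhoods of the critical points -/
  W : Fin N → Set ℝ
  W_open : ∀ i, IsOpen (W i)
  c_mem_W : ∀ i, c i ∈ W i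
  /-- the criticalities (power-law exponents) -/
  s : Fin N → ℝ
  s_gt_one : ∀ i, 1 < s i
  al : Fin N → ℝ
  be : Fin N → ℝ
  al_pos : ∀ i, 0 < al i
  al_lt_be : ∀ i, al i < be i
  powerLaw : ∀ i, ∀ x ∈ W i, x ≠ c i →
    al i * |x - c i| ^ (s i - 1) < deriv F x ∧
      deriv F x < be i * |x - c i| ^ (s i - 1)
  negSchwarzian : ∀ i, ∀ x ∈ W i, x ≠ c i → schwarzianDeriv F x < 0
  /-- bound for the variation of `log DF` off the critical neighborhoods -/
  v : ℝ
  v_pos : 0 < v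
  logDF_var : eVariationOn (fun x => Real.log (deriv F x))
      (Set.Icc 0 1 \ ⋃ (i) (k : ℤ), (fun y => y + (k : ℝ)) '' W i) ≤ ENNReal.ofReal v

/-- The circle map with lift `F` has rotation number `ρ`. -/
def HasRotationNumber (F : ℝ → ℝ) (ρ : ℝ) : Prop :=
  Tendsto (fun n : ℕ => F^[n] 0 / n) atTop (nhds ρ)

/-- The Gauss map `x ↦ {1/x}`. -/
def gaussMap (x : ℝ) : ℝ := Int.fract x⁻¹

/-- Partial quotients `a_n` of the continued fraction expansion of `ρ ∈ (0,1)`. -/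
def cfDigit (ρ : ℝ) (n : ℕ) : ℕ := (⌊(gaussMap^[n] ρ)⁻¹⌋).toNat

/-- Return times: the denominators `q_n` of the convergents of `ρ`,
`q_0 = 1`, `q_1 = a_0`, `q_{n+1} = a_n q_n + q_{n-1}`. -/
def qDen (ρ : ℝ) : ℕ → ℕ
  | 0 => 1
  | 1 => cfDigit ρ 0
  | n + 2 => cfDigit ρ (n + 1) * qDen ρ (n + 1) + qDen ρ n

/-- Numerators `p_n` of the convergents of `ρ`:
`p_0 = 0`, `p_1 = 1`, `p_{n+1} = a_n p_n + p_{n-1}`. -/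
def pNum (ρ : ℝ) : ℕ → ℕ
  | 0 => 0
  | 1 => 1
  | n + 2 => cfDigit ρ (n + 1) * pNum ρ (n + 1) + pNum ρ n

/-!
Let `g` be the return `f^{q_n}`, lifted to the line and replaced by its inverse if it moves points
to the left. The claim is that consecutive gaps `g x - x` and `g (g x) - g x` are comparable,
which holds as soon as the cross-ratios of `x, g x, g² x, g³ x` are bounded below. Around a
shortest gap such a bound is clear. It can be pulled back along an orbit: each application of `f`
increases a cross-ratio by at most the exponential of the mass, in a finite measure on the circle,
of the arc spanned by the four points, and by the combinatorics of closest returns these arcs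
cover the circle a bounded number of times during the first `2 q_{n+1}` iterates. A first
pull-back finds two consecutive gaps which are almost shortest, and from there a second one
reaches every point.

For a multicritical circle map the measure is a multiple of length plus an atom at each critical
point. Near a critical point cross-ratios are not increased as long as the four points do not span
it, since the Schwarzian derivative is negative there, and are increased by a bounded factor
otherwise, by the power law; away from the critical points `log Df` is Lipschitz.
-/

/-! ### Cross-ratios -/

/-- The cross-ratio `(b - a)(d - c) / ((c - a)(d - b))` of four points, with values in `(0, 1)` when
`a < b < c < d`. It is close to `0` exactly when the gap between `b` and `c` is large compared with
one of its two neighbours, so that a lower bound means that neighbouring gaps are comparable. -/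
def crossRatio (a b c d : ℝ) : ℝ := (b - a) * (d - c) / ((c - a) * (d - b))

section CrossRatio

variable {a b c d : ℝ}

lemma crossRatio_pos (hab : a < b) (hbc : b < c) (hcd : c < d) : 0 < crossRatio a b c d := by
  have := sub_pos.2 hab
  have := sub_pos.2 hcd
  have := sub_pos.2 (hab.trans hbc)
  have := sub_pos.2 (hbc.trans hcd)
  unfold crossRatio
  positivity

lemma crossRatio_add_right (a b c d s : ℝ) :
    crossRatio (a + s) (b + s) (c + s) (d + s) = crossRatio a b c d := by
  simp only [crossRatio, add_sub_add_right_eq_sub]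

lemma inv_sq_le_crossRatio {l K : ℝ} (hl : 0 < l) (hab : l ≤ b - a) (hbc : 0 < c - b)
    (hbc' : c - b ≤ K * l) (hcd : l ≤ d - c) : ((1 + K) ^ 2)⁻¹ ≤ crossRatio a b c d := by
  have hK : 0 < K := pos_of_mul_pos_left (hbc.trans_le hbc') hl.le
  have hca : c - a ≤ (1 + K) * (b - a) := by nlinarith
  have hdb : d - b ≤ (1 + K) * (d - c) := by nlinarith
  have hca₀ : 0 < c - a := by linarith
  have hdb₀ : 0 < d - b := by linarith
  rw [crossRatio, inv_eq_one_div, div_le_div_iff₀ (by positivity) (by positivity), one_mul]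
  calc (c - a) * (d - b) ≤ (1 + K) * (b - a) * ((1 + K) * (d - c)) :=
        mul_le_mul hca hdb hdb₀.le (hca₀.le.trans hca)
    _ = (b - a) * (d - c) * (1 + K) ^ 2 := by ring

lemma gap_le_of_inv_le_crossRatio {C : ℝ} (hab : a < b) (hbc : b < c) (hcd : c < d) (hC : 0 < C)
    (h : C⁻¹ ≤ crossRatio a b c d) : c - b ≤ C * (b - a) ∧ c - b ≤ C * (d - c) := by
  have hba := sub_pos.2 hab
  have hcb := sub_pos.2 hbc
  have hdc := sub_pos.2 hcd
  have hca : 0 < c - a := by linarith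
  have hdb : 0 < d - b := by linarith
  rw [crossRatio, inv_eq_one_div, div_le_div_iff₀ hC (by positivity), one_mul] at h
  constructor
  · refine le_of_mul_le_mul_right ?_ hdb
    calc (c - b) * (d - b) ≤ (c - a) * (d - b) := by gcongr
      _ ≤ (b - a) * (d - c) * C := h
      _ = C * (b - a) * (d - c) := by ring
      _ ≤ C * (b - a) * (d - b) := by gcongr
  · refine le_of_mul_le_mul_right ?_ hca
    calc (c - b) * (c - a) ≤ (d - b) * (c - a) := by gcongr
      _ = (c - a) * (d - b) := mul_comm _ _
      _ ≤ (b - a) * (d - c) * C := h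
      _ = C * (d - c) * (b - a) := by ring
      _ ≤ C * (d - c) * (c - a) := by gcongr

end CrossRatio

/-! ### Maps with nonpositive Schwarzian derivative -/

section Schwarzian

lemma contDiffAt_deriv {f : ℝ → ℝ} {m n : WithTop ℕ∞} {t : ℝ} (hf : ContDiffAt ℝ n f t)
    (hmn : m + 1 ≤ n) : ContDiffAt ℝ m (deriv f) t :=
  (hf.fderiv_right hmn).clm_apply contDiffAt_const

lemma hasDerivAt_inv_sqrt {g : ℝ → ℝ} {g' t : ℝ} (hg : HasDerivAt g g' t) (ht : 0 < g t) :
    HasDerivAt (fun s => (√(g s))⁻¹) (-(1 / 2) * (g' / g t) * (√(g t))⁻¹) t := by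
  refine ((hg.sqrt ht.ne').inv (Real.sqrt_pos.2 ht).ne').congr_deriv ?_
  rw [Real.sq_sqrt ht.le]
  ring

-- `(f - e) / √f'` solves the Hill equation `u'' = -(Sf / 2) u`.
lemma hasDerivAt_hill {f : ℝ → ℝ} {t : ℝ} (hf : ContDiffAt ℝ 3 f t) (ht : 0 < deriv f t) (e : ℝ) :
    HasDerivAt (fun s => (f s - e) * (√(deriv f s))⁻¹)
      (deriv f t * (√(deriv f t))⁻¹ +
        (f t - e) * (-(1 / 2) * (deriv (deriv f) t / deriv f t) * (√(deriv f t))⁻¹)) t ∧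
    HasDerivAt (fun s => deriv f s * (√(deriv f s))⁻¹ +
        (f s - e) * (-(1 / 2) * (deriv (deriv f) s / deriv f s) * (√(deriv f s))⁻¹))
      ((f t - e) * (√(deriv f t))⁻¹ * (-(1 / 2) * schwarzianDeriv f t)) t := by
  have hf' : ContDiffAt ℝ 2 (deriv f) t := contDiffAt_deriv hf (by norm_num)
  have hf'' : ContDiffAt ℝ 1 (deriv (deriv f)) t := contDiffAt_deriv hf' (by norm_num)
  have d₀ := ((hf.differentiableAt (by norm_num)).hasDerivAt).sub_const e
  have d₁ := (hf'.differentiableAt (by norm_num)).hasDerivAt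
  have d₂ := (hf''.differentiableAt (by norm_num)).hasDerivAt
  have dφ := hasDerivAt_inv_sqrt d₁ ht
  have dN := (d₂.div d₁ ht.ne').differentiableAt.hasDerivAt
  refine ⟨d₀.mul dφ, ((d₁.mul dφ).add (d₀.mul ((dN.const_mul (-(1 / 2))).mul dφ))).congr_deriv ?_⟩
  have hN : deriv (deriv f) t = deriv f t * (deriv (deriv f) t / deriv f t) := by field_simp
  simp only [schwarzianDeriv, Pi.mul_apply, Pi.div_def]
  generalize deriv (deriv f) t / deriv f t = N at hN ⊢
  rw [hN]
  ring

variable {f : ℝ → ℝ}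

lemma strictMonoOn_Icc_of_deriv_pos {a b : ℝ} (hpos : ∀ t ∈ Icc a b, 0 < deriv f t) :
    StrictMonoOn f (Icc a b) :=
  strictMonoOn_of_deriv_pos (convex_Icc a b)
    (fun t ht =>
      (differentiableAt_of_deriv_ne_zero (hpos t ht).ne').continuousAt.continuousWithinAt)
    fun t ht => hpos t (interior_subset ht)

-- Convexity of `(f - f x) / √f'` on `[x, y]` puts it above its tangent at `x`, where it vanishes.
lemma deriv_mul_deriv_mul_sq_le {x y : ℝ} (hxy : x < y) (hf : ∀ t ∈ Icc x y, ContDiffAt ℝ 3 f t)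
    (hpos : ∀ t ∈ Icc x y, 0 < deriv f t) (hS : ∀ t ∈ Icc x y, schwarzianDeriv f t ≤ 0) :
    deriv f x * deriv f y * (y - x) ^ 2 ≤ (f y - f x) ^ 2 := by
  have hx := left_mem_Icc.2 hxy.le
  have hy := right_mem_Icc.2 hxy.le
  have hill t (ht : t ∈ Icc x y) := hasDerivAt_hill (hf t ht) (hpos t ht) (f x)
  have hmono := (strictMonoOn_Icc_of_deriv_pos hpos).monotoneOn
  have hslope : MonotoneOn _ (Icc x y) := monotoneOn_of_hasDerivWithinAt_nonneg (convex_Icc x y)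
    (fun t ht => (hill t ht).2.continuousAt.continuousWithinAt)
    (fun t ht => (hill t (interior_subset ht)).2.hasDerivWithinAt)
    (fun t ht => by
      have ht := interior_subset ht
      have := sub_nonneg.2 (hmono hx ht ht.1)
      have : 0 ≤ -(1 / 2) * schwarzianDeriv f t := by linarith [hS t ht]
      positivity)
  have htangent := (convex_Icc x y).mul_sub_le_image_sub_of_le_deriv
    (fun t ht => (hill t ht).1.continuousAt.continuousWithinAt)
    (fun t ht => (hill t (interior_subset ht)).1.differentiableAt.differentiableWithinAt)
    (fun t ht => by
      have ht := interior_subset ht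
      rw [(hill t ht).1.deriv]
      exact hslope hx ht ht.1) x hx y hy hxy.le
  simp only [sub_self, zero_mul, add_zero, sub_zero] at htangent
  have hsqrt {t} (ht : t ∈ Icc x y) : 0 < √(deriv f t) ∧ √(deriv f t) ^ 2 = deriv f t :=
    ⟨Real.sqrt_pos.2 (hpos t ht), Real.sq_sqrt (hpos t ht).le⟩
  obtain ⟨hx₀, hx₂⟩ := hsqrt hx
  obtain ⟨hy₀, hy₂⟩ := hsqrt hy
  have hgeom : √(deriv f x) * √(deriv f y) * (y - x) ≤ f y - f x := by
    rw [← hx₂, Real.sqrt_sq hx₀.le, ← div_eq_mul_inv, ← div_eq_mul_inv, pow_two, mul_div_assoc,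
      div_self hx₀.ne', mul_one, le_div_iff₀ hy₀] at htangent
    linarith
  calc deriv f x * deriv f y * (y - x) ^ 2 = (√(deriv f x) * √(deriv f y) * (y - x)) ^ 2 := by
        rw [mul_pow, mul_pow, hx₂, hy₂]
    _ ≤ (f y - f x) ^ 2 := by
        have := sub_pos.2 hxy
        gcongr

lemma antitoneOn_deriv_div_sub {a b t : ℝ} (hbt : b < t) (hf : ∀ s ∈ Icc a t, ContDiffAt ℝ 3 f s)
    (hpos : ∀ s ∈ Icc a t, 0 < deriv f s) (hS : ∀ s ∈ Icc a t, schwarzianDeriv f s ≤ 0) :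
    AntitoneOn (fun x => deriv f t / (f t - f x) - 1 / (t - x)) (Icc a b) := by
  have hsub {x} (hx : x ∈ Icc a b) : 0 < t - x ∧ 0 < f t - f x := by
    have hxt := hx.2.trans_lt hbt
    exact ⟨sub_pos.2 hxt, sub_pos.2 <| strictMonoOn_Icc_of_deriv_pos hpos
      ⟨hx.1, hxt.le⟩ (right_mem_Icc.2 (hx.1.trans hxt.le)) hxt⟩
  have hderiv x (hx : x ∈ Icc a b) :
      HasDerivAt (fun x => deriv f t / (f t - f x) - 1 / (t - x))
        (deriv f t * deriv f x / (f t - f x) ^ 2 - 1 / (t - x) ^ 2) x := by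
    have hfx := (hf x ⟨hx.1, hx.2.trans hbt.le⟩).differentiableAt (by norm_num)
    have d₁ := (hasDerivAt_const x (deriv f t)).div (hfx.hasDerivAt.const_sub (f t)) (hsub hx).2.ne'
    have d₂ := (hasDerivAt_const x (1 : ℝ)).div ((hasDerivAt_id x).const_sub t) (hsub hx).1.ne'
    refine (d₁.sub d₂).congr_deriv ?_
    simp only [id_eq, zero_mul, mul_neg, sub_neg_eq_add, zero_add, mul_one]
  refine antitoneOn_of_hasDerivWithinAt_nonpos (convex_Icc a b)
    (fun x hx => (hderiv x hx).continuousAt.continuousWithinAt)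
    (fun x hx => (hderiv x (interior_subset hx)).hasDerivWithinAt) fun x hx => ?_
  have hx := interior_subset hx
  obtain ⟨htx, hftx⟩ := hsub hx
  have hI : Icc x t ⊆ Icc a t := Icc_subset_Icc_left hx.1
  have := deriv_mul_deriv_mul_sq_le (sub_pos.1 htx) (fun s hs => hf s (hI hs))
    (fun s hs => hpos s (hI hs)) fun s hs => hS s (hI hs)
  rw [sub_nonpos, div_le_div_iff₀ (by positivity) (by positivity)]
  linarith

lemma monotoneOn_log_slope_sub_log_slope {a b c d : ℝ} (hab : a < b) (hbc : b < c)
    (hf : ∀ t ∈ Icc a d, ContDiffAt ℝ 3 f t) (hpos : ∀ t ∈ Icc a d, 0 < deriv f t)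
    (hS : ∀ t ∈ Icc a d, schwarzianDeriv f t ≤ 0) :
    MonotoneOn (fun t => (Real.log (f t - f a) - Real.log (t - a)) -
      (Real.log (f t - f b) - Real.log (t - b))) (Icc c d) := by
  have hI {t} (ht : t ∈ Icc c d) : Icc a t ⊆ Icc a d := Icc_subset_Icc_right ht.2
  have hmem {t} (ht : t ∈ Icc c d) : t ∈ Icc a d := ⟨by linarith [ht.1], ht.2⟩
  have hderiv_log {x t} (hx : x ∈ Icc a b) (ht : t ∈ Icc c d) :
      HasDerivAt (fun t => Real.log (f t - f x) - Real.log (t - x))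
        (deriv f t / (f t - f x) - 1 / (t - x)) t := by
    have hxt : x < t := by linarith [hx.2, ht.1]
    have hfxt := strictMonoOn_Icc_of_deriv_pos hpos
      ⟨hx.1, hxt.le.trans ht.2⟩ (hmem ht) hxt
    have hft := (hf t (hmem ht)).differentiableAt (by norm_num)
    exact ((hft.hasDerivAt.sub_const (f x)).log (sub_pos.2 hfxt).ne').sub
      (((hasDerivAt_id t).sub_const x).log (sub_pos.2 hxt).ne')
  have ha := left_mem_Icc.2 hab.le
  have hb := right_mem_Icc.2 hab.le
  have hderiv t (ht : t ∈ Icc c d) := (hderiv_log ha ht).sub (hderiv_log hb ht)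
  refine monotoneOn_of_hasDerivWithinAt_nonneg (convex_Icc c d)
    (fun t ht => (hderiv t ht).continuousAt.continuousWithinAt)
    (fun t ht => (hderiv t (interior_subset ht)).hasDerivWithinAt) fun t ht => sub_nonneg.2 ?_
  have ht := interior_subset ht
  exact antitoneOn_deriv_div_sub (hbc.trans_le ht.1) (fun s hs => hf s (hI ht hs))
    (fun s hs => hpos s (hI ht hs)) (fun s hs => hS s (hI ht hs)) ha hb hab.le

theorem crossRatio_comp_le_of_schwarzianDeriv_nonpos {a b c d : ℝ} (hab : a < b) (hbc : b < c)
    (hcd : c < d) (hf : ∀ t ∈ Icc a d, ContDiffAt ℝ 3 f t) (hpos : ∀ t ∈ Icc a d, 0 < deriv f t)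
    (hS : ∀ t ∈ Icc a d, schwarzianDeriv f t ≤ 0) :
    crossRatio (f a) (f b) (f c) (f d) ≤ crossRatio a b c d := by
  have hmono := strictMonoOn_Icc_of_deriv_pos hpos
  have hfab : f a < f b := hmono ⟨le_rfl, by linarith⟩ ⟨hab.le, by linarith⟩ hab
  have hfbc : f b < f c := hmono ⟨hab.le, by linarith⟩ ⟨by linarith, hcd.le⟩ hbc
  have hfcd : f c < f d := hmono ⟨by linarith, hcd.le⟩ ⟨by linarith, le_rfl⟩ hcd
  have hlog := monotoneOn_log_slope_sub_log_slope hab hbc hf hpos hS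
    (left_mem_Icc.2 hcd.le) (right_mem_Icc.2 hcd.le) hcd.le
  have : 0 < c - a := by linarith
  have : 0 < c - b := by linarith
  have : 0 < d - a := by linarith
  have : 0 < d - b := by linarith
  have : 0 < f c - f a := by linarith
  have : 0 < f c - f b := by linarith
  have : 0 < f d - f a := by linarith
  have : 0 < f d - f b := by linarith
  -- `(b - a) (d - c) = (c - a) (d - b) - (c - b) (d - a)`
  have hcross : (f c - f a) * (c - b) * ((f d - f b) * (d - a)) ≤
      (f d - f a) * (d - b) * ((f c - f b) * (c - a)) := by
    rw [← Real.log_le_log_iff (by positivity) (by positivity)]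
    rw [Real.log_mul, Real.log_mul, Real.log_mul, Real.log_mul, Real.log_mul, Real.log_mul] <;>
      first | positivity | linarith
  rw [crossRatio, crossRatio, div_le_div_iff₀ (by positivity) (by positivity)]
  linarith

end Schwarzian

/-! ### Return maps -/

/-- The lift `x ↦ f^q x - p` of the `q`-th iterate of a circle homeomorphism `f`. Both exponents are
integers, so that the return maps form a group. -/
def returnMap (f : CircleDeg1Liftˣ) (q p : ℤ) : CircleDeg1Liftˣ :=
  CircleDeg1Lift.translate (Multiplicative.ofAdd (-(p : ℝ))) * f ^ q

section ReturnMap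

variable (f : CircleDeg1Liftˣ)

lemma returnMap_apply (q p : ℤ) (x : ℝ) : returnMap f q p x = (f ^ q) x - p := by
  simp only [returnMap, Units.val_mul, CircleDeg1Lift.mul_apply, CircleDeg1Lift.translate_apply]
  ring

lemma returnMap_natCast_apply (n : ℕ) (p : ℤ) (x : ℝ) : returnMap f n p x = f^[n] x - p := by
  rw [returnMap_apply, zpow_natCast, Units.val_pow_eq_pow_val, CircleDeg1Lift.coe_pow]

lemma returnMap_returnMap (q p m r : ℤ) (x : ℝ) :
    returnMap f q p (returnMap f m r x) = returnMap f (q + m) (p + r) x := by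
  simp only [returnMap_apply, CircleDeg1Lift.map_sub_int, zpow_add, Units.val_mul,
    CircleDeg1Lift.mul_apply, Int.cast_add]
  ring

lemma returnMap_comm (q p m r : ℤ) (x : ℝ) :
    returnMap f q p (returnMap f m r x) = returnMap f m r (returnMap f q p x) := by
  rw [returnMap_returnMap, returnMap_returnMap, add_comm q, add_comm p]

lemma returnMap_zero_zero (x : ℝ) : returnMap f 0 0 x = x := by
  simp [returnMap_apply]

lemma strictMono_returnMap (q p : ℤ) : StrictMono (returnMap f q p) :=
  (CircleDeg1Lift.toOrderIso (returnMap f q p)).strictMono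

lemma continuous_returnMap (q p : ℤ) : Continuous (returnMap f q p) :=
  (CircleDeg1Lift.toOrderIso (returnMap f q p)).continuous

lemma surjective_returnMap (q p : ℤ) : Function.Surjective (returnMap f q p) :=
  (CircleDeg1Lift.toOrderIso (returnMap f q p)).surjective

variable {f} {q p m r : ℤ} {x : ℝ}

local notation "τ" => CircleDeg1Lift.translationNumber

lemma returnMap_lt_returnMap (h : q * τ f - p < m * τ f - r) (x : ℝ) :
    returnMap f q p x < returnMap f m r x := by
  have h' : ((r - p : ℤ) : ℝ) < τ (f ^ (m - q) : CircleDeg1Liftˣ) := by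
    rw [CircleDeg1Lift.translationNumber_zpow]
    push_cast
    linarith
  have := CircleDeg1Lift.lt_map_of_int_lt_translationNumber _ h' (returnMap f q p x)
  have hcomp := returnMap_returnMap f (m - q) (r - p) q p x
  rw [sub_add_cancel, sub_add_cancel] at hcomp
  rw [← hcomp, returnMap_apply f (m - q)]
  linarith

lemma returnMap_lt_returnMap_iff (hf : Irrational (τ f)) :
    returnMap f q p x < returnMap f m r x ↔ q * τ f - p < m * τ f - r := by
  refine ⟨fun h => lt_of_not_ge fun hle => ?_, fun h => returnMap_lt_returnMap h x⟩
  rcases hle.lt_or_eq with hlt | heq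
  · exact h.not_gt (returnMap_lt_returnMap hlt x)
  · have hqm : q = m := by
      by_contra hne
      exact (hf.intCast_mul (sub_ne_zero.2 hne)).ne_int (p - r) (by push_cast; linarith)
    subst hqm
    obtain rfl : p = r := by exact_mod_cast (sub_right_injective heq).symm
    exact h.ne rfl

lemma returnMap_le_returnMap_iff (hf : Irrational (τ f)) :
    returnMap f q p x ≤ returnMap f m r x ↔ q * τ f - p ≤ m * τ f - r := by
  simpa only [not_lt] using (returnMap_lt_returnMap_iff hf).not

/-- The orbit point to the left of `w` and closest to `w` enters `[w, g w]` when it is moved either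
forward by the return `(u, a)` or backward by the return `(v, b)`. -/
lemma exists_returnMap_mem_Icc (hf : Irrational (τ f)) {u v : ℕ} {a b : ℤ} (huv : 0 < u + v)
    (ha : 0 < u * τ f - a) (ha' : u * τ f - a ≤ q * τ f - p)
    (hb : 0 < b - v * τ f) (hb' : b - v * τ f ≤ q * τ f - p) (x w : ℝ) :
    ∃ k : ℕ, k < u + v ∧ ∃ r : ℤ, returnMap f k r x ∈ Icc w (returnMap f q p w) := by
  let best (k : ℕ) : ℤ := ⌈(f ^ (k : ℤ)) x - w⌉
  have le_best {k : ℕ} {r : ℤ} (h : returnMap f k r x ≤ w) :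
      returnMap f k r x ≤ returnMap f k (best k) x := by
    rw [returnMap_apply] at h ⊢
    rw [returnMap_apply]
    have : (best k : ℝ) ≤ r := by exact_mod_cast Int.ceil_le.2 (by linarith)
    linarith
  have best_le (k : ℕ) : returnMap f k (best k) x ≤ w := by
    rw [returnMap_apply]
    linarith [Int.le_ceil ((f ^ (k : ℤ)) x - w)]
  obtain ⟨k, hk, hmax⟩ := (Finset.range (u + v)).exists_max_image
    (fun k => returnMap f k (best k) x) ⟨0, Finset.mem_range.2 huv⟩
  have hk := Finset.mem_range.1 hk
  have move {k' : ℕ} {s c : ℤ} (hk' : k' < u + v) (hs : (k' : ℤ) = s + k)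
      (h : 0 < s * τ f - c) (h' : s * τ f - c ≤ q * τ f - p) :
      returnMap f k' (c + best k) x ∈ Icc w (returnMap f q p w) := by
    rw [hs, ← returnMap_returnMap]
    constructor
    · by_contra! hlt
      rw [returnMap_returnMap, ← hs] at hlt
      refine ((le_best hlt.le).trans (hmax k' (Finset.mem_range.2 hk'))).not_gt ?_
      rw [hs, returnMap_lt_returnMap_iff hf]
      push_cast
      linarith
    · exact ((returnMap_le_returnMap_iff hf).2 h').trans
        ((strictMono_returnMap f q p).monotone (best_le k))
  rcases lt_or_ge k v with hkv | hkv
  · exact ⟨u + k, by omega, _, move (s := u) (by omega) (by push_cast; rfl) ha ha'⟩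
  · exact ⟨k - v, by omega, _, move (s := -v) (c := -b) (by omega) (by omega)
      (by push_cast; linarith) (by push_cast; linarith)⟩

end ReturnMap

/-- `(q, p)` and `(Q, P)` are consecutive closest returns of the rotation by `ρ`. The exponent `q`
carries a sign, chosen so that the return `(q, p)` moves points to the right: when `q < 0` it is the
inverse of the dynamical return `(-q, -p)`. The return `(Q, P)` has `0 < Q` and moves points in the
direction opposite to `(|q|, ±p)`. -/
structure ClosestReturns (ρ : ℝ) (q p : ℤ) (Q : ℕ) (P : ℤ) : Prop where
  pos : 0 < q * ρ - p
  abs_le_next : |q| ≤ Q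
  next_opposite : q * (Q * ρ - P) < 0
  next_closer : |Q * ρ - P| ≤ q * ρ - p
  best : ∀ m r : ℤ, 0 < m → m < Q → q * ρ - p ≤ |m * ρ - r|

section ClosestReturns

variable {f : CircleDeg1Liftˣ} {q p : ℤ} {Q : ℕ} {P : ℤ}

local notation "τ" => CircleDeg1Lift.translationNumber

lemma lt_returnMap_self (h : 0 < q * τ f - p) (x : ℝ) : x < returnMap f q p x := by
  have h := returnMap_lt_returnMap (q := 0) (p := 0) (by simpa using h) x
  rwa [returnMap_zero_zero] at h

lemma ClosestReturns.exists_mem_Icc (h : ClosestReturns (τ f) q p Q P) (hf : Irrational (τ f))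
    (x w : ℝ) : ∃ n ≤ 2 * Q, ∃ r : ℤ, returnMap f n r x ∈ Icc w (returnMap f q p w) := by
  have hcloser := abs_le.1 h.next_closer
  have habs := abs_le.1 h.abs_le_next
  rcases lt_trichotomy q 0 with hq | rfl | hq
  · have hcast : ((q.natAbs : ℕ) : ℝ) = -q := by
      rw [Nat.cast_natAbs, abs_of_neg hq, Int.cast_neg]
    have hopp : 0 < Q * τ f - P :=
      pos_of_mul_neg_right h.next_opposite (Int.cast_nonpos.2 hq.le)
    obtain ⟨k, hk, hr⟩ := exists_returnMap_mem_Icc hf (u := Q) (v := q.natAbs) (a := P) (b := -p)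
      (by omega) hopp hcloser.2
      (by rw [hcast]; push_cast; linarith [h.pos]) (by rw [hcast]; push_cast; linarith) x w
    exact ⟨k, by omega, hr⟩
  · simpa using h.next_opposite
  · have hcast : ((q.toNat : ℕ) : ℝ) = q := by exact_mod_cast Int.toNat_of_nonneg hq.le
    have hopp : Q * τ f - P < 0 := neg_of_mul_neg_right h.next_opposite (Int.cast_nonneg hq.le)
    obtain ⟨k, hk, hr⟩ := exists_returnMap_mem_Icc hf (u := q.toNat) (v := Q) (a := p) (b := P)
      (by omega) (by rw [hcast]; exact h.pos) (by rw [hcast])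
      (by linarith) (by linarith) x w
    exact ⟨k, by omega, hr⟩

/-- The image in the circle of the interval between `f^j x` and its return by `(q, p)`. -/
def returnArc (f : CircleDeg1Liftˣ) (q p : ℤ) (x : ℝ) (j : ℕ) : Set UnitAddCircle :=
  (↑) '' Ico (returnMap f j 0 x) (returnMap f q p (returnMap f j 0 x))

lemma measurableSet_coe_image_Ico (a b : ℝ) :
    MeasurableSet (((↑) : ℝ → UnitAddCircle) '' Ico a b) := by
  rcases lt_or_ge a b with hab | hab
  · rw [← Ioo_insert_left hab, image_insert_eq]
    exact (QuotientAddGroup.isOpenMap_coe _ isOpen_Ioo).measurableSet.insert _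
  · simp [Ico_eq_empty_of_le hab]

lemma ClosestReturns.pairwiseDisjoint_returnArc (h : ClosestReturns (τ f) q p Q P)
    (hf : Irrational (τ f)) (x : ℝ) :
    (Finset.range Q : Set ℕ).PairwiseDisjoint (returnArc f q p x) := by
  suffices key : ∀ j k : ℕ, j < k → k < Q → Disjoint (returnArc f q p x j) (returnArc f q p x k) by
    intro j hj k hk hjk
    rcases hjk.lt_or_gt with hlt | hlt
    · exact key j k hlt (by simpa using hk)
    · exact (key k j hlt (by simpa using hj)).symm
  intro j k hjk hkQ
  rw [Set.disjoint_left]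
  rintro _ ⟨s, ⟨hjs, hsj⟩, rfl⟩ ⟨t, ⟨hkt, htk⟩, hts⟩
  obtain ⟨r, hr⟩ : ∃ r : ℤ, r • (1 : ℝ) = t - s := by
    rw [← AddCircle.coe_eq_zero_iff, AddCircle.coe_sub, hts, sub_self]
  rw [zsmul_one] at hr
  simp only [returnMap_returnMap, add_zero] at hjs hsj hkt htk
  simp only [returnMap_apply, Int.cast_zero] at hjs hsj hkt htk
  have hleft : returnMap f k r x < returnMap f (q + j) p x := by
    simp only [returnMap_apply]
    linarith
  have hright : returnMap f j 0 x < returnMap f (q + k) (p + r) x := by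
    simp only [returnMap_apply, Int.cast_add, Int.cast_zero]
    linarith
  rw [returnMap_lt_returnMap_iff hf] at hleft hright
  push_cast at hleft hright
  have hbest := h.best (k - j) r (by omega) (by omega)
  push_cast at hbest
  exact hbest.not_gt (abs_lt.2 ⟨by linarith, by linarith⟩)

lemma ClosestReturns.sum_measureReal_returnArc_le (h : ClosestReturns (τ f) q p Q P)
    (hf : Irrational (τ f)) (μ : Measure UnitAddCircle) [IsFiniteMeasure μ] (x : ℝ) :
    ∑ j ∈ Finset.range Q, μ.real (returnArc f q p x j) ≤ μ.real univ :=
  sum_measureReal_le_measureReal_univ (fun _ _ => measurableSet_coe_image_Ico _ _)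
    (h.pairwiseDisjoint_returnArc hf x)

/-- `F` increases the cross-ratio of four points by a factor which is at most the exponential of the
`μ`-mass of the arc that they span on the circle. -/
def CrossRatioDistortion (F : ℝ → ℝ) (μ : Measure UnitAddCircle) : Prop :=
  ∀ ⦃a b c d : ℝ⦄, a < b → b < c → c < d → crossRatio (F a) (F b) (F c) (F d) ≤
    Real.exp (μ.real ((↑) '' Icc a d)) * crossRatio a b c d

/-- The cross-ratio of four consecutive returns of a point by `(q, p)`. -/
def returnCrossRatio (f : CircleDeg1Liftˣ) (q p : ℤ) (x : ℝ) : ℝ :=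
  crossRatio x (returnMap f q p x) (returnMap f q p (returnMap f q p x))
    (returnMap f q p (returnMap f q p (returnMap f q p x)))

lemma returnCrossRatio_pos (h : 0 < q * τ f - p) (x : ℝ) : 0 < returnCrossRatio f q p x :=
  crossRatio_pos (lt_returnMap_self h _) (lt_returnMap_self h _) (lt_returnMap_self h _)

lemma returnCrossRatio_sub_intCast (x : ℝ) (r : ℤ) :
    returnCrossRatio f q p (x - r) = returnCrossRatio f q p x := by
  simp only [returnCrossRatio, CircleDeg1Lift.map_sub_int]
  simpa only [sub_eq_add_neg] using crossRatio_add_right x _ _ _ (-(r : ℝ))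

variable {μ : Measure UnitAddCircle}

/-- The factor by which the cross-ratio of four consecutive closest returns may grow along an orbit
up to twice the next return time. -/
def distortionConst (μ : Measure UnitAddCircle) : ℝ := Real.exp (8 * μ.real univ)

lemma distortionConst_pos (μ : Measure UnitAddCircle) : 0 < distortionConst μ := Real.exp_pos _

lemma one_le_distortionConst (μ : Measure UnitAddCircle) : 1 ≤ distortionConst μ :=
  Real.one_le_exp (by positivity)

lemma CrossRatioDistortion.returnCrossRatio_map_le (hμ : CrossRatioDistortion f μ)
    (h : 0 < q * τ f - p) (y : ℝ) :
    returnCrossRatio f q p (f y) ≤ Real.exp (μ.real ((↑) '' Icc y ((returnMap f q p)^[3] y))) *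
      returnCrossRatio f q p y := by
  have hf (z : ℝ) : f z = returnMap f 1 0 z := by simp [returnMap_apply]
  have hlt := lt_returnMap_self h
  convert hμ (hlt y) (hlt _) (hlt _) using 1
  · simp only [returnCrossRatio, hf, returnMap_comm f 1 0 q p]
  · rfl

lemma CrossRatioDistortion.returnCrossRatio_le_exp_sum (hμ : CrossRatioDistortion f μ)
    (h : 0 < q * τ f - p) (n : ℕ) (x : ℝ) :
    returnCrossRatio f q p (f^[n] x) ≤
      Real.exp (∑ j ∈ Finset.range n,
          μ.real ((↑) '' Icc (f^[j] x) ((returnMap f q p)^[3] (f^[j] x)))) *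
        returnCrossRatio f q p x := by
  induction n with
  | zero => simp
  | succ n ih =>
    rw [Function.iterate_succ_apply', Finset.sum_range_succ, add_comm, Real.exp_add, mul_assoc]
    exact (hμ.returnCrossRatio_map_le h _).trans (by gcongr)

variable [IsFiniteMeasure μ]

lemma measureReal_coe_image_Icc_le {a₀ a₁ a₂ a₃ a₄ : ℝ} (h₃₄ : a₃ < a₄) :
    μ.real ((↑) '' Icc a₀ a₃) ≤ μ.real ((↑) '' Ico a₀ a₁) + μ.real ((↑) '' Ico a₁ a₂) +
      μ.real ((↑) '' Ico a₂ a₃) + μ.real ((↑) '' Ico a₃ a₄) := by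
  have hcover : Icc a₀ a₃ ⊆ Ico a₀ a₁ ∪ Ico a₁ a₂ ∪ Ico a₂ a₃ ∪ Ico a₃ a₄ := by
    intro t ht
    by_contra hn
    simp only [mem_union, mem_Ico, not_or, not_and, not_lt] at hn
    obtain ⟨⟨⟨h₀, h₁⟩, h₂⟩, h₃⟩ := hn
    exact (h₃ (h₂ (h₁ (h₀ ht.1)))).not_gt (ht.2.trans_lt h₃₄)
  refine (measureReal_mono (image_mono hcover)).trans ?_
  simp only [image_union]
  grw [measureReal_union_le, measureReal_union_le, measureReal_union_le]

lemma ClosestReturns.returnCrossRatio_iterate_le (hc : ClosestReturns (τ f) q p Q P)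
    (hf : Irrational (τ f)) (hμ : CrossRatioDistortion f μ) {n : ℕ} (hn : n ≤ Q) (x : ℝ) :
    returnCrossRatio f q p (f^[n] x) ≤ Real.exp (4 * μ.real univ) * returnCrossRatio f q p x := by
  refine (hμ.returnCrossRatio_le_exp_sum hc.pos n x).trans ?_
  gcongr
  · exact (returnCrossRatio_pos hc.pos x).le
  set g := returnMap f q p with hg
  have hsum (y : ℝ) := hc.sum_measureReal_returnArc_le hf μ y
  calc ∑ j ∈ Finset.range n, μ.real ((↑) '' Icc (f^[j] x) (g^[3] (f^[j] x)))
      ≤ ∑ j ∈ Finset.range Q, μ.real ((↑) '' Icc (f^[j] x) (g^[3] (f^[j] x))) := by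
        gcongr
    _ ≤ ∑ j ∈ Finset.range Q, (μ.real (returnArc f q p x j) + μ.real (returnArc f q p (g x) j) +
          μ.real (returnArc f q p (g (g x)) j) + μ.real (returnArc f q p (g (g (g x))) j)) := by
        refine Finset.sum_le_sum fun j _ => ?_
        have := measureReal_coe_image_Icc_le (μ := μ) (a₀ := f^[j] x) (a₁ := g (f^[j] x))
          (a₂ := g (g (f^[j] x))) (lt_returnMap_self hc.pos (g (g (g (f^[j] x)))))
        simpa only [returnArc, returnMap_comm f j 0 q p, hg, returnMap_natCast_apply, Int.cast_zero,
          sub_zero, Function.iterate_succ_apply, Function.iterate_zero_apply] using this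
    _ ≤ 4 * μ.real univ := by
        simp only [Finset.sum_add_distrib]
        linarith [hsum x, hsum (g x), hsum (g (g x)), hsum (g (g (g x)))]

lemma ClosestReturns.returnCrossRatio_returnMap_le (hc : ClosestReturns (τ f) q p Q P)
    (hf : Irrational (τ f)) (hμ : CrossRatioDistortion f μ) {n : ℕ} (hn : n ≤ 2 * Q) (r : ℤ)
    (x : ℝ) :
    returnCrossRatio f q p (returnMap f n r x) ≤ distortionConst μ * returnCrossRatio f q p x := by
  rw [returnMap_natCast_apply, returnCrossRatio_sub_intCast,
    ← Nat.sub_add_cancel (Nat.div_le_self n 2), Function.iterate_add_apply]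
  refine (hc.returnCrossRatio_iterate_le hf hμ (by omega) _).trans ?_
  have := hc.returnCrossRatio_iterate_le hf hμ (by omega : n / 2 ≤ Q) x
  calc _ ≤ Real.exp (4 * μ.real univ) *
          (Real.exp (4 * μ.real univ) * returnCrossRatio f q p x) := by gcongr
    _ = _ := by
        rw [← mul_assoc, ← Real.exp_add, distortionConst]
        ring_nf

lemma ClosestReturns.inv_mul_le_returnCrossRatio (hc : ClosestReturns (τ f) q p Q P)
    (hf : Irrational (τ f)) (hμ : CrossRatioDistortion f μ) {C x : ℝ} {n : ℕ} {r : ℤ}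
    (hn : n ≤ 2 * Q) (h : C⁻¹ ≤ returnCrossRatio f q p (returnMap f n r x)) :
    (C * distortionConst μ)⁻¹ ≤ returnCrossRatio f q p x := by
  rw [mul_inv, ← div_eq_mul_inv, div_le_iff₀' (distortionConst_pos μ)]
  exact h.trans (hc.returnCrossRatio_returnMap_le hf hμ hn r x)

lemma exists_returnMap_gap_le (f : CircleDeg1Liftˣ) (q p : ℤ) :
    ∃ z, ∀ x, returnMap f q p z - z ≤ returnMap f q p x - x := by
  have hper : Function.Periodic (fun x => returnMap f q p x - x) 1 := fun x => by
    simp only [CircleDeg1Lift.map_add_one, add_sub_add_right_eq_sub]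
  obtain ⟨_, ⟨⟨z, rfl⟩, hz⟩⟩ := (hper.compact_of_continuous one_ne_zero
    ((continuous_returnMap f q p).sub continuous_id)).exists_isLeast (range_nonempty _)
  exact ⟨z, fun x => hz ⟨x, rfl⟩⟩

lemma inv_four_le_returnCrossRatio_of_min (h : 0 < q * τ f - p) {y : ℝ}
    (hy : ∀ x, returnMap f q p (returnMap f q p y) - returnMap f q p y ≤ returnMap f q p x - x) :
    4⁻¹ ≤ returnCrossRatio f q p y := by
  have hpos := sub_pos.2 (lt_returnMap_self h (returnMap f q p y))
  calc (4 : ℝ)⁻¹ = ((1 + 1) ^ 2)⁻¹ := by norm_num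
    _ ≤ _ := inv_sq_le_crossRatio hpos (hy y) hpos (one_mul _).ge (hy _)

-- Next to a minimal gap three consecutive gaps are comparable. Pulling them back by the dynamical
-- return, which is `(q, p)` or its inverse, bounds one gap adjacent to the minimal one.
lemma ClosestReturns.exists_two_gaps_le (hc : ClosestReturns (τ f) q p Q P) (hf : Irrational (τ f))
    (hμ : CrossRatioDistortion f μ) :
    ∃ w, ∀ x, returnMap f q p (returnMap f q p w) - w ≤
      (1 + 4 * distortionConst μ) * (returnMap f q p x - x) := by
  obtain ⟨z, hz⟩ := exists_returnMap_gap_le f q p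
  obtain ⟨y, rfl⟩ := surjective_returnMap f q p z
  have hy := inv_four_le_returnCrossRatio_of_min hc.pos hz
  have hB := distortionConst_pos μ
  set g := returnMap f q p with hg
  have hlt (x : ℝ) : x < g x := lt_returnMap_self hc.pos x
  have pullback {n : ℕ} {e : ℝ} {r : ℤ} (hn : n ≤ 2 * Q) (he : returnMap f n r e = y) :=
    gap_le_of_inv_le_crossRatio (hlt e) (hlt (g e)) (hlt (g (g e))) (by positivity)
      (hc.inv_mul_le_returnCrossRatio hf hμ (C := 4) hn (he ▸ hy))
  suffices ∃ w, g (g w) - w ≤ (1 + 4 * distortionConst μ) * (g (g y) - g y) by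
    obtain ⟨w, hw⟩ := this
    exact ⟨w, fun x => hw.trans (mul_le_mul_of_nonneg_left (hz x) (by positivity))⟩
  have habs := abs_le.1 hc.abs_le_next
  rcases le_or_gt 0 q with hq | hq
  · lift q to ℕ using hq
    obtain ⟨e, he⟩ := surjective_returnMap f q p y
    have := (pullback (by omega) he).2
    rw [hg, he] at this
    exact ⟨y, by linarith⟩
  · obtain ⟨m, hm⟩ := Int.eq_ofNat_of_zero_le (neg_nonneg.2 hq.le)
    have he : returnMap f m (-p) (g y) = y := by
      rw [← hm, hg, returnMap_returnMap, neg_add_cancel, neg_add_cancel, returnMap_zero_zero]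
    exact ⟨g y, by linarith [(pullback (by omega) he).1]⟩

lemma ClosestReturns.inv_le_returnCrossRatio (hc : ClosestReturns (τ f) q p Q P)
    (hf : Irrational (τ f)) (hμ : CrossRatioDistortion f μ) (x : ℝ) :
    ((2 + 4 * distortionConst μ) ^ 2 * distortionConst μ)⁻¹ ≤ returnCrossRatio f q p x := by
  obtain ⟨w, hw⟩ := hc.exists_two_gaps_le hf hμ
  obtain ⟨z, hz⟩ := exists_returnMap_gap_le f q p
  obtain ⟨v, rfl⟩ := surjective_returnMap f q p w
  set g := returnMap f q p
  have hlt (x : ℝ) : x < g x := lt_returnMap_self hc.pos x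
  have hmono : StrictMono g := strictMono_returnMap f q p
  obtain ⟨n, hn, r, hr⟩ := hc.exists_mem_Icc hf x v
  set b := returnMap f n r x
  refine hc.inv_mul_le_returnCrossRatio hf hμ hn (r := r) ?_
  have hgb : g v ≤ g b := hmono.monotone hr.1
  have hggb : g (g b) ≤ g (g (g v)) := hmono.monotone (hmono.monotone hr.2)
  rw [show 2 + 4 * distortionConst μ = 1 + (1 + 4 * distortionConst μ) by ring]
  exact inv_sq_le_crossRatio (sub_pos.2 (hlt z)) (hz b) (sub_pos.2 (hlt (g b)))
    (by linarith [hw z]) (hz (g (g b)))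

theorem ClosestReturns.gaps_comparable (hc : ClosestReturns (τ f) q p Q P)
    (hf : Irrational (τ f)) (hμ : CrossRatioDistortion f μ) (x : ℝ) :
    returnMap f q p (returnMap f q p x) - returnMap f q p x ≤
        (2 + 4 * distortionConst μ) ^ 2 * distortionConst μ * (returnMap f q p x - x) ∧
      returnMap f q p x - x ≤ (2 + 4 * distortionConst μ) ^ 2 * distortionConst μ *
        (returnMap f q p (returnMap f q p x) - returnMap f q p x) := by
  have hlt := lt_returnMap_self hc.pos
  have hB := distortionConst_pos μ
  have hgap (y : ℝ) := gap_le_of_inv_le_crossRatio (hlt y) (hlt _) (hlt _) (by positivity)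
    (hc.inv_le_returnCrossRatio hf hμ y)
  obtain ⟨v, rfl⟩ := surjective_returnMap f q p x
  exact ⟨(hgap _).1, (hgap v).2⟩

end ClosestReturns

/-! ### Continued fractions -/

lemma abs_mul_sub_le_abs_mul_sub_of_isUnit_det {ρ : ℝ} {q p Q P m r : ℤ}
    (hdet : IsUnit (q * P - Q * p)) (hopp : (q * ρ - p) * (Q * ρ - P) ≤ 0) (hq : 0 ≤ q)
    (hm : 0 < m) (hmQ : m < Q) : |q * ρ - p| ≤ |m * ρ - r| := by
  obtain ⟨u, v, hmuv, hruv⟩ : ∃ u v : ℤ, m = u * q + v * Q ∧ r = u * p + v * P := by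
    have hsq := Int.isUnit_mul_self hdet
    refine ⟨(q * P - Q * p) * (m * P - r * Q), (q * P - Q * p) * (q * r - p * m), ?_, ?_⟩
    · linear_combination -m * hsq
    · linear_combination -r * hsq
  have hu : u ≠ 0 := by
    rintro rfl
    rcases le_or_gt v 0 with hv | hv <;> nlinarith
  have huv : u * v ≤ 0 := by
    by_contra! h
    rcases pos_and_pos_or_neg_and_neg_of_mul_pos h with ⟨hu, hv⟩ | ⟨hu, hv⟩ <;> nlinarith
  have huv' : (u : ℝ) * v ≤ 0 := by exact_mod_cast huv
  have hcombination : m * ρ - r = u * (q * ρ - p) + v * (Q * ρ - P) := by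
    rw [hmuv, hruv]
    push_cast
    ring
  have hsame_sign : 0 ≤ u * (q * ρ - p) * (v * (Q * ρ - P)) := by
    nlinarith [mul_nonneg_of_nonpos_of_nonpos huv' hopp]
  have hu' : (1 : ℝ) ≤ |(u : ℝ)| := by exact_mod_cast Int.one_le_abs hu
  calc |q * ρ - p| ≤ |(u : ℝ)| * |q * ρ - p| := le_mul_of_one_le_left (abs_nonneg _) hu'
    _ = |u * (q * ρ - p)| := (abs_mul _ _).symm
    _ ≤ |u * (q * ρ - p)| + |v * (Q * ρ - P)| := le_add_of_nonneg_right (abs_nonneg _)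
    _ = |m * ρ - r| := by
      rw [hcombination, (abs_add_eq_add_abs_iff _ _).2 (mul_nonneg_iff.1 hsame_sign)]

section ContinuedFraction

variable {ρ : ℝ}

lemma qDen_mul_pNum_succ_sub (ρ : ℝ) (n : ℕ) :
    (qDen ρ n : ℤ) * pNum ρ (n + 1) - qDen ρ (n + 1) * pNum ρ n = (-1) ^ n := by
  induction n with
  | zero => simp [qDen, pNum]
  | succ n ih =>
    rw [qDen, pNum, pow_succ]
    push_cast
    linear_combination -ih

lemma irrational_iterate_gaussMap (hρ : Irrational ρ) (n : ℕ) : Irrational (gaussMap^[n] ρ) := by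
  induction n with
  | zero => exact hρ
  | succ n ih =>
    rw [Function.iterate_succ_apply']
    exact ih.inv.sub_intCast _

lemma iterate_gaussMap_mem_Ioo (hρ : Irrational ρ) (hmem : ρ ∈ Ioo (0 : ℝ) 1) (n : ℕ) :
    gaussMap^[n] ρ ∈ Ioo (0 : ℝ) 1 := by
  cases n with
  | zero => exact hmem
  | succ n =>
    have hne := (irrational_iterate_gaussMap hρ (n + 1)).ne_zero
    rw [Function.iterate_succ_apply'] at hne ⊢
    exact ⟨(Int.fract_nonneg _).lt_of_ne' hne, Int.fract_lt_one _⟩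

lemma one_le_cfDigit (hρ : Irrational ρ) (hmem : ρ ∈ Ioo (0 : ℝ) 1) (n : ℕ) :
    1 ≤ cfDigit ρ n := by
  obtain ⟨h0, h1⟩ := iterate_gaussMap_mem_Ioo hρ hmem n
  have : 1 ≤ ⌊(gaussMap^[n] ρ)⁻¹⌋ := Int.le_floor.2 (by exact_mod_cast (one_le_inv₀ h0).2 h1.le)
  rw [cfDigit]
  omega

lemma cast_cfDigit (hρ : Irrational ρ) (hmem : ρ ∈ Ioo (0 : ℝ) 1) (n : ℕ) :
    (cfDigit ρ n : ℝ) = (gaussMap^[n] ρ)⁻¹ - gaussMap^[n + 1] ρ := by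
  have hfloor : 0 ≤ ⌊(gaussMap^[n] ρ)⁻¹⌋ :=
    Int.floor_nonneg.2 (inv_nonneg.2 (iterate_gaussMap_mem_Ioo hρ hmem n).1.le)
  rw [Function.iterate_succ_apply', gaussMap, Int.self_sub_fract, cfDigit]
  exact_mod_cast Int.toNat_of_nonneg hfloor

lemma qDen_pos (hρ : Irrational ρ) (hmem : ρ ∈ Ioo (0 : ℝ) 1) (n : ℕ) : 0 < qDen ρ n := by
  induction n using Nat.twoStepInduction with
  | zero => exact Nat.one_pos
  | one => exact one_le_cfDigit hρ hmem 0
  | more n ih _ => exact Nat.add_pos_right _ ih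

lemma qDen_le_qDen_succ (hρ : Irrational ρ) (hmem : ρ ∈ Ioo (0 : ℝ) 1) (n : ℕ) :
    qDen ρ n ≤ qDen ρ (n + 1) := by
  cases n with
  | zero => exact one_le_cfDigit hρ hmem 0
  | succ n => exact Nat.le_add_right_of_le (Nat.le_mul_of_pos_left _ (one_le_cfDigit hρ hmem _))

lemma qDen_succ_mul_sub_pNum_succ (hρ : Irrational ρ) (hmem : ρ ∈ Ioo (0 : ℝ) 1) (n : ℕ) :
    qDen ρ (n + 1) * ρ - pNum ρ (n + 1) = -gaussMap^[n + 1] ρ * (qDen ρ n * ρ - pNum ρ n) := by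
  have hdigit := cast_cfDigit hρ hmem n
  have hne : gaussMap^[n] ρ ≠ 0 := (iterate_gaussMap_mem_Ioo hρ hmem n).1.ne'
  induction n with
  | zero =>
    rw [Function.iterate_zero_apply] at hdigit hne
    simp only [qDen, pNum, hdigit]
    push_cast
    field_simp
    ring
  | succ n ih =>
    have ih := ih (cast_cfDigit hρ hmem n) (iterate_gaussMap_mem_Ioo hρ hmem n).1.ne'
    have hprev : qDen ρ n * ρ - pNum ρ n =
        -(gaussMap^[n + 1] ρ)⁻¹ * (qDen ρ (n + 1) * ρ - pNum ρ (n + 1)) := by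
      rw [ih]
      field_simp
    rw [qDen, pNum]
    push_cast
    rw [hdigit]
    linear_combination hprev

lemma qDen_mul_sub_pNum_ne_zero (hρ : Irrational ρ) (hmem : ρ ∈ Ioo (0 : ℝ) 1) (n : ℕ) :
    qDen ρ n * ρ - pNum ρ n ≠ 0 :=
  sub_ne_zero.2 ((hρ.natCast_mul (qDen_pos hρ hmem n).ne').ne_nat _)

lemma qDen_mul_sub_pNum_mul_succ_neg (hρ : Irrational ρ) (hmem : ρ ∈ Ioo (0 : ℝ) 1) (n : ℕ) :
    (qDen ρ n * ρ - pNum ρ n) * (qDen ρ (n + 1) * ρ - pNum ρ (n + 1)) < 0 := by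
  rw [qDen_succ_mul_sub_pNum_succ hρ hmem]
  nlinarith [mul_pos (iterate_gaussMap_mem_Ioo hρ hmem (n + 1)).1
    (pow_two_pos_of_ne_zero (qDen_mul_sub_pNum_ne_zero hρ hmem n))]

lemma abs_qDen_succ_mul_sub_le (hρ : Irrational ρ) (hmem : ρ ∈ Ioo (0 : ℝ) 1) (n : ℕ) :
    |qDen ρ (n + 1) * ρ - pNum ρ (n + 1)| ≤ |qDen ρ n * ρ - pNum ρ n| := by
  obtain ⟨h0, h1⟩ := iterate_gaussMap_mem_Ioo hρ hmem (n + 1)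
  rw [qDen_succ_mul_sub_pNum_succ hρ hmem, abs_mul, abs_neg, abs_of_pos h0]
  exact mul_le_of_le_one_left (abs_nonneg _) h1.le

lemma abs_qDen_mul_sub_pNum_le (hρ : Irrational ρ) (hmem : ρ ∈ Ioo (0 : ℝ) 1) (n : ℕ) {m r : ℤ}
    (hm : 0 < m) (hmQ : m < qDen ρ (n + 1)) : |qDen ρ n * ρ - pNum ρ n| ≤ |m * ρ - r| := by
  have hdet : IsUnit ((qDen ρ n : ℤ) * pNum ρ (n + 1) - qDen ρ (n + 1) * pNum ρ n) := by
    rw [qDen_mul_pNum_succ_sub]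
    exact isUnit_neg_one.pow n
  exact_mod_cast abs_mul_sub_le_abs_mul_sub_of_isUnit_det (ρ := ρ) hdet
    (by exact_mod_cast (qDen_mul_sub_pNum_mul_succ_neg hρ hmem n).le) (Int.natCast_nonneg _) hm hmQ

lemma closestReturns_qDen (hρ : Irrational ρ) (hmem : ρ ∈ Ioo (0 : ℝ) 1) {n : ℕ}
    (hpos : 0 < qDen ρ n * ρ - pNum ρ n) :
    ClosestReturns ρ (qDen ρ n) (pNum ρ n) (qDen ρ (n + 1)) (pNum ρ (n + 1)) where
  pos := by exact_mod_cast hpos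
  abs_le_next := by exact_mod_cast qDen_le_qDen_succ hρ hmem n
  next_opposite := by
    have := neg_of_mul_neg_right (qDen_mul_sub_pNum_mul_succ_neg hρ hmem n) hpos.le
    exact_mod_cast mul_neg_of_pos_of_neg (Nat.cast_pos.2 (qDen_pos hρ hmem n)) this
  next_closer := by
    exact_mod_cast abs_of_pos hpos ▸ abs_qDen_succ_mul_sub_le hρ hmem n
  best m r hm hmQ := by
    exact_mod_cast abs_of_pos hpos ▸ abs_qDen_mul_sub_pNum_le hρ hmem n hm hmQ

lemma closestReturns_neg_qDen (hρ : Irrational ρ) (hmem : ρ ∈ Ioo (0 : ℝ) 1) {n : ℕ}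
    (hneg : qDen ρ n * ρ - pNum ρ n < 0) :
    ClosestReturns ρ (-qDen ρ n) (-pNum ρ n) (qDen ρ (n + 1)) (pNum ρ (n + 1)) := by
  have habs : ((-qDen ρ n : ℤ) : ℝ) * ρ - (-pNum ρ n : ℤ) = |qDen ρ n * ρ - pNum ρ n| := by
    rw [abs_of_neg hneg]
    push_cast
    ring
  refine ⟨habs ▸ abs_pos.2 hneg.ne, ?_, ?_, habs ▸ ?_, fun m r hm hmQ => habs ▸ ?_⟩
  · rw [abs_neg]
    exact_mod_cast qDen_le_qDen_succ hρ hmem n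
  · have := pos_of_mul_neg_right (qDen_mul_sub_pNum_mul_succ_neg hρ hmem n) hneg.le
    push_cast
    nlinarith [mul_pos (Nat.cast_pos (α := ℝ).2 (qDen_pos hρ hmem n)) this]
  · exact_mod_cast abs_qDen_succ_mul_sub_le hρ hmem n
  · exact abs_qDen_mul_sub_pNum_le hρ hmem n hm hmQ

end ContinuedFraction

/-! ### Distortion of multicritical circle maps -/

section DerivLeSlope

/-- On `[u, v]` the derivative of `F` exceeds the average slope of `F` by at most the factor `K`. -/
def DerivLeSlope (F : ℝ → ℝ) (K u v : ℝ) : Prop :=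
  ∀ t ∈ Icc u v, deriv F t * (v - u) ≤ K * (F v - F u)

variable {F : ℝ → ℝ} {K u v : ℝ}

lemma DerivLeSlope.image_sub_mul_le (h : DerivLeSlope F K u v) (hF : Differentiable ℝ F) {x y : ℝ}
    (hux : u ≤ x) (hxy : x < y) (hyv : y ≤ v) :
    (F y - F x) * (v - u) ≤ K * (F v - F u) * (y - x) := by
  obtain ⟨t, ht, hslope⟩ :=
    exists_deriv_eq_slope F hxy hF.continuous.continuousOn hF.differentiableOn
  rw [eq_div_iff (sub_pos.2 hxy).ne'] at hslope
  have := h t ⟨hux.trans ht.1.le, ht.2.le.trans hyv⟩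
  nlinarith [sub_pos.2 hxy]

lemma derivLeSlope_of_deriv_le (hF : Differentiable ℝ F) (huv : u < v)
    (h : ∀ t ∈ Icc u v, ∀ s ∈ Icc u v, deriv F t ≤ K * deriv F s) : DerivLeSlope F K u v := by
  obtain ⟨s, hs, hslope⟩ :=
    exists_deriv_eq_slope F huv hF.continuous.continuousOn hF.differentiableOn
  rw [eq_div_iff (sub_pos.2 huv).ne'] at hslope
  intro t ht
  rw [← hslope, ← mul_assoc]
  exact mul_le_mul_of_nonneg_right (h t ht s (Ioo_subset_Icc_self hs)) (sub_pos.2 huv).le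

lemma crossRatio_comp_le_of_derivLeSlope {K₁ K₂ a b c d : ℝ} (hF : Differentiable ℝ F)
    (hmono : StrictMono F) (hab : a < b) (hbc : b < c) (hcd : c < d)
    (hac : DerivLeSlope F K₁ a c) (hbd : DerivLeSlope F K₂ b d) :
    crossRatio (F a) (F b) (F c) (F d) ≤ K₁ * K₂ * crossRatio a b c d := by
  have hleft := hac.image_sub_mul_le hF le_rfl hab hbc.le
  have hright := hbd.image_sub_mul_le hF hbc.le hcd le_rfl
  have hFdc := sub_pos.2 (hmono hcd)
  have hFca := sub_pos.2 (hmono (hab.trans hbc))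
  have hFdb := sub_pos.2 (hmono (hbc.trans hcd))
  have hFba := sub_pos.2 (hmono hab)
  have hca := sub_pos.2 (hab.trans hbc)
  have hdb := sub_pos.2 (hbc.trans hcd)
  rw [crossRatio, crossRatio, ← mul_div_assoc, div_le_div_iff₀ (by positivity) (by positivity)]
  calc (F b - F a) * (F d - F c) * ((c - a) * (d - b))
      = (F b - F a) * (c - a) * ((F d - F c) * (d - b)) := by ring
    _ ≤ K₁ * (F c - F a) * (b - a) * (K₂ * (F d - F b) * (d - c)) :=
        mul_le_mul hleft hright (by positivity)
          ((by positivity : 0 ≤ (F b - F a) * (c - a)).trans hleft)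
    _ = K₁ * K₂ * ((b - a) * (d - c)) * ((F c - F a) * (F d - F b)) := by ring

lemma exists_Icc_subset_half_max_le_abs_sub (huv : u < v) (c : ℝ) :
    ∃ a, Icc a (a + (v - u) / 4) ⊆ Icc u v ∧
      ∀ t ∈ Icc a (a + (v - u) / 4), max |u - c| |v - c| / 2 ≤ |t - c| := by
  rcases le_total |u - c| |v - c| with h | h
  · have hc : 0 ≤ v - c := by
      by_contra! hneg
      rw [abs_of_neg hneg, abs_of_neg (by linarith)] at h
      linarith
    rw [max_eq_right h]
    rw [abs_of_nonneg hc] at h ⊢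
    refine ⟨v - (v - u) / 4, Icc_subset_Icc (by linarith) (by linarith), fun t ht => ?_⟩
    exact le_trans (by linarith [ht.1, (abs_le.1 h).1]) (le_abs_self _)
  · have hc : u - c ≤ 0 := by
      by_contra! hpos
      rw [abs_of_pos hpos, abs_of_pos (by linarith)] at h
      linarith
    rw [max_eq_left h]
    rw [abs_of_nonpos hc] at h ⊢
    refine ⟨u, Icc_subset_Icc le_rfl (by linarith), fun t ht => ?_⟩
    exact le_trans (by linarith [ht.2, (abs_le.1 h).2]) (neg_le_abs _)

/-- At least a quarter of `[u, v]` lies at distance comparable with the largest one from `c`. -/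
lemma derivLeSlope_of_powerLaw (hF : Differentiable ℝ F) (huv : u < v) {c α β σ : ℝ} (hα : 0 < α)
    (hβ : 0 ≤ β) (hσ : 0 ≤ σ) (hlower : ∀ t ∈ Icc u v, α * |t - c| ^ σ ≤ deriv F t)
    (hupper : ∀ t ∈ Icc u v, deriv F t ≤ β * |t - c| ^ σ) :
    DerivLeSlope F (4 * 2 ^ σ * β / α) u v := by
  obtain ⟨a, ha, hdist⟩ := exists_Icc_subset_half_max_le_abs_sub huv c
  set M := max |u - c| |v - c|
  have hM : 0 ≤ M := le_max_of_le_left (abs_nonneg _)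
  have hquarter : a ≤ a + (v - u) / 4 := by linarith
  have haI := ha (left_mem_Icc.2 hquarter)
  have haI' := ha (right_mem_Icc.2 hquarter)
  have hmono : MonotoneOn F (Icc u v) := monotoneOn_of_deriv_nonneg (convex_Icc u v)
    hF.continuous.continuousOn hF.differentiableOn fun t ht =>
      le_trans (by positivity) (hlower t (interior_subset ht))
  have hgrowth : α * (M / 2) ^ σ * ((v - u) / 4) ≤ F v - F u := by
    have := Convex.mul_sub_le_image_sub_of_le_deriv (convex_Icc a (a + (v - u) / 4))
      hF.continuous.continuousOn hF.differentiableOn (C := α * (M / 2) ^ σ)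
      (fun t ht => le_trans (by have := hdist t (interior_subset ht); gcongr)
        (hlower t (ha (interior_subset ht))))
      a (left_mem_Icc.2 hquarter) _ (right_mem_Icc.2 hquarter) hquarter
    rw [add_sub_cancel_left] at this
    linarith [hmono (left_mem_Icc.2 huv.le) haI haI.1, hmono haI' (right_mem_Icc.2 huv.le) haI'.2]
  intro t ht
  have htM : |t - c| ≤ M := abs_le_max_abs_abs (sub_le_sub_right ht.1 c) (sub_le_sub_right ht.2 c)
  calc deriv F t * (v - u) ≤ β * M ^ σ * (v - u) :=
        mul_le_mul_of_nonneg_right ((hupper t ht).trans (by gcongr)) (sub_pos.2 huv).le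
    _ = 4 * 2 ^ σ * β / α * (α * (M / 2) ^ σ * ((v - u) / 4)) := by
        rw [Real.div_rpow hM zero_le_two]
        field_simp
    _ ≤ 4 * 2 ^ σ * β / α * (F v - F u) := mul_le_mul_of_nonneg_left hgrowth (by positivity)

end DerivLeSlope

section Uniformization

/-- `P K u v`, a property of the interval `[u, v]` and a constant `K`, holds with a common constant
for all intervals near `x`. -/
def LocallyUniform (P : ℝ → ℝ → ℝ → Prop) (x : ℝ) : Prop :=
  ∃ U ∈ nhds x, ∃ K, ∀ u v, u < v → Icc u v ⊆ U → P K u v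

variable {P : ℝ → ℝ → ℝ → Prop}

lemma LocallyUniform.add_int (hper : ∀ K u v (k : ℤ), P K u v → P K (u + k) (v + k)) {x : ℝ}
    (h : LocallyUniform P x) (k : ℤ) : LocallyUniform P (x + k) := by
  obtain ⟨U, hU, K, hP⟩ := h
  refine ⟨(fun y => y - k) ⁻¹' U, ?_, K, fun u v huv hsub => ?_⟩
  · exact (continuous_sub_right (k : ℝ)).continuousAt.preimage_mem_nhds
      (by rwa [add_sub_cancel_right])
  · have hsub' : Icc (u - k) (v - k) ⊆ U := fun t ht => by
      simpa using hsub (a := t + k) ⟨by linarith [ht.1], by linarith [ht.2]⟩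
    simpa using hper _ _ _ k (hP (u - k) (v - k) (by linarith) hsub')

lemma exists_forall_short_of_locallyUniform
    (hmono : ∀ ⦃K K' u v⦄, K ≤ K' → u < v → P K u v → P K' u v)
    (hper : ∀ K u v (k : ℤ), P K u v → P K (u + k) (v + k)) (hloc : ∀ x, LocallyUniform P x) :
    ∃ δ > 0, ∃ K, ∀ u v, u < v → v < u + δ → P K u v := by
  obtain ⟨δ, hδ, K, h⟩ : ∃ δ > 0, ∃ K, ∀ u ∈ Icc (0 : ℝ) 1, ∀ v, u < v → v < u + δ → P K u v := by
    refine isCompact_Icc.induction_on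
      (p := fun s => ∃ δ > 0, ∃ K, ∀ u ∈ s, ∀ v, u < v → v < u + δ → P K u v)
      ⟨1, one_pos, 0, by simp⟩ (fun s t hst ⟨δ, hδ, K, h⟩ => ⟨δ, hδ, K, fun u hu => h u (hst hu)⟩)
      ?_ fun x _ => ?_
    · rintro s t ⟨δ, hδ, K, hs⟩ ⟨δ', hδ', K', ht⟩
      refine ⟨min δ δ', lt_min hδ hδ', max K K', ?_⟩
      rintro u (hu | hu) v huv hv
      · exact hmono (le_max_left _ _) huv (hs u hu v huv (by linarith [min_le_left δ δ']))
      · exact hmono (le_max_right _ _) huv (ht u hu v huv (by linarith [min_le_right δ δ']))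
    · obtain ⟨U, hU, K, h⟩ := hloc x
      obtain ⟨r, hr, hball⟩ := Metric.mem_nhds_iff.1 hU
      refine ⟨Metric.ball x (r / 2),
        mem_nhdsWithin_of_mem_nhds (Metric.ball_mem_nhds x (half_pos hr)), r / 2, half_pos hr, K,
        fun u hu v huv hv => h u v huv fun t ht => hball ?_⟩
      rw [Metric.mem_ball, Real.dist_eq, abs_lt] at hu ⊢
      constructor <;> linarith [ht.1, ht.2]
  refine ⟨δ, hδ, K, fun u v huv hv => ?_⟩
  have := hper _ _ _ ⌊u⌋ (h (Int.fract u) ⟨Int.fract_nonneg u, (Int.fract_lt_one u).le⟩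
    (v - ⌊u⌋) (by linarith [Int.self_sub_floor u]) (by linarith [Int.self_sub_floor u]))
  rwa [Int.fract_add_floor, sub_add_cancel] at this

end Uniformization

section ArcMeasure

lemma coe_image_Icc_add_int (u v : ℝ) (k : ℤ) :
    ((↑) : ℝ → UnitAddCircle) '' Icc (u + k) (v + k) = (↑) '' Icc u v := by
  have hcoe : ((k : ℝ) : UnitAddCircle) = 0 := (AddCircle.coe_eq_zero_iff 1).2 ⟨k, by simp⟩
  rw [← image_add_const_Icc, image_image]
  simp only [AddCircle.coe_add, hcoe, add_zero]

lemma min_one_le_volume_coe_image_Icc (u v : ℝ) :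
    ENNReal.ofReal (min 1 (v - u)) ≤ volume (((↑) : ℝ → UnitAddCircle) '' Icc u v) := by
  have hpres := UnitAddCircle.measurePreserving_mk u
  calc ENNReal.ofReal (min 1 (v - u)) = volume (Icc u v ∩ Ioc u (u + 1)) := by
        have : Icc u v ∩ Ioc u (u + 1) = Ioc u (min v (u + 1)) := by
          ext t
          simp only [mem_inter_iff, mem_Icc, mem_Ioc, le_min_iff]
          constructor <;> grind
        rw [this, Real.volume_Ioc, ← min_sub_sub_right, add_sub_cancel_left, min_comm]
    _ ≤ (volume.restrict (Ioc u (u + 1))) (((↑) : ℝ → UnitAddCircle) ⁻¹' ((↑) '' Icc u v)) :=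
        (Measure.le_restrict_apply _ _).trans' (measure_mono
          (inter_subset_inter_left _ (subset_preimage_image _ _)))
    _ ≤ volume (((↑) : ℝ → UnitAddCircle) '' Icc u v) := by
        conv_rhs => rw [← hpres.map_eq]
        exact Measure.le_map_apply hpres.aemeasurable _

end ArcMeasure

namespace MCM

variable (f : MCM)

/-- The lift `f.F` as an invertible element of the monoid of degree one circle maps. -/
def toUnit : CircleDeg1Liftˣ :=
  IsUnit.unit (a := (⟨⟨f.F, f.mono.monotone⟩, f.deg1⟩ : CircleDeg1Lift)) <|
    CircleDeg1Lift.isUnit_iff_bijective.2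
      ⟨f.mono.injective, (CircleDeg1Lift.continuous_iff_surjective _).1 f.smooth.continuous⟩

lemma map_add_int (x : ℝ) (k : ℤ) : f.F (x + k) = f.F x + k := f.toUnit.1.map_add_int x k

lemma deriv_add_int (x : ℝ) (k : ℤ) : deriv f.F (x + k) = deriv f.F x := by
  rw [← deriv_comp_add_const]
  simp only [f.map_add_int, deriv_add_const]

lemma differentiable : Differentiable ℝ f.F := f.smooth.differentiable (by norm_num)

lemma continuous_deriv : Continuous (deriv f.F) := f.smooth.continuous_deriv (by norm_num)

lemma deriv_pos_of_ne_zero {x : ℝ} (hx : deriv f.F x ≠ 0) : 0 < deriv f.F x :=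
  f.mono.monotone.deriv_nonneg.lt_of_ne' hx

lemma exists_forall_short {P : ℝ → ℝ → ℝ → Prop}
    (hmono : ∀ ⦃K K' u v⦄, K ≤ K' → u < v → P K u v → P K' u v)
    (hper : ∀ K u v (k : ℤ), P K u v → P K (u + k) (v + k))
    (hcrit : ∀ i, LocallyUniform P (f.c i))
    (hreg : ∀ x, 0 < deriv f.F x → LocallyUniform P x) :
    ∃ δ > 0, ∃ K, ∀ u v, u < v → v < u + δ → P K u v := by
  refine exists_forall_short_of_locallyUniform hmono hper fun x => ?_
  by_cases hx : deriv f.F x = 0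
  · obtain ⟨i, k, rfl⟩ := f.critOnly x hx
    exact (hcrit i).add_int hper k
  · exact hreg x (f.deriv_pos_of_ne_zero hx)

lemma exists_derivLeSlope_exp {x : ℝ} (hx : 0 < deriv f.F x) :
    ∃ U ∈ nhds x, ∃ L : ℝ, 0 ≤ L ∧
      ∀ u v, u < v → Icc u v ⊆ U → DerivLeSlope f.F (Real.exp (L * (v - u))) u v := by
  have hlog : ContDiffAt ℝ 1 (fun t => Real.log (deriv f.F t)) x :=
    (contDiffAt_deriv f.smooth.contDiffAt (by norm_num)).log hx.ne'
  obtain ⟨L, s, hs, hL⟩ := hlog.exists_lipschitzOnWith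
  refine ⟨s ∩ {t | 0 < deriv f.F t}, inter_mem hs
    (f.continuous_deriv.continuousAt.eventually (lt_mem_nhds hx)), L, L.2, fun u v huv hsub => ?_⟩
  refine derivLeSlope_of_deriv_le f.differentiable huv fun t ht t' ht' => ?_
  have hdist := (le_abs_self _).trans (hL.dist_le_mul t (hsub ht).1 t' (hsub ht').1)
  have hle : (L : ℝ) * dist t t' ≤ L * (v - u) :=
    mul_le_mul_of_nonneg_left (Real.dist_le_of_mem_Icc ht ht') L.2
  rw [← Real.log_le_log_iff (hsub ht).2 (mul_pos (Real.exp_pos _) (hsub ht').2),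
    Real.log_mul (Real.exp_pos _).ne' (hsub ht').2.ne', Real.log_exp]
  linarith

lemma locallyUniform_derivLeSlope_crit (i : Fin f.N) :
    LocallyUniform (DerivLeSlope f.F) (f.c i) := by
  have hs : 0 < f.s i - 1 := sub_pos.2 (f.s_gt_one i)
  have hzero {t : ℝ} (ht : t = f.c i) : |t - f.c i| ^ (f.s i - 1) = 0 ∧ deriv f.F t = 0 := by
    rw [ht, sub_self, abs_zero, Real.zero_rpow hs.ne']
    exact ⟨rfl, f.isCrit i⟩
  refine ⟨f.W i, (f.W_open i).mem_nhds (f.c_mem_W i), _, fun u v huv hsub =>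
    derivLeSlope_of_powerLaw f.differentiable huv (c := f.c i) (f.al_pos i)
      ((f.al_pos i).trans (f.al_lt_be i)).le hs.le (fun t ht => ?_) (fun t ht => ?_)⟩
  all_goals
    rcases eq_or_ne t (f.c i) with htc | htc
    · simp [hzero htc]
  · exact (f.powerLaw i t (hsub ht) htc).1.le
  · exact (f.powerLaw i t (hsub ht) htc).2.le

lemma exists_derivLeSlope_short :
    ∃ δ > 0, ∃ K, ∀ u v, u < v → v < u + δ → DerivLeSlope f.F K u v := by
  refine f.exists_forall_short (fun K K' u v hK huv h t ht => (h t ht).trans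
    (mul_le_mul_of_nonneg_right hK (sub_pos.2 (f.mono huv)).le)) (fun K u v k h t ht => ?_)
    f.locallyUniform_derivLeSlope_crit fun x hx => ?_
  · have := h (t - k) ⟨by linarith [ht.1], by linarith [ht.2]⟩
    rw [← f.deriv_add_int, sub_add_cancel] at this
    simpa only [f.map_add_int, add_sub_add_right_eq_sub] using this
  · obtain ⟨U, hU, L, hL, h⟩ := f.exists_derivLeSlope_exp hx
    refine ⟨U ∩ Metric.ball x 1, inter_mem hU (Metric.ball_mem_nhds x one_pos), Real.exp (L * 2),
      fun u v huv hsub t ht => (h u v huv (hsub.trans inter_subset_left) t ht).trans ?_⟩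
    have hlen : v - u ≤ 2 := by
      have hu := (hsub (left_mem_Icc.2 huv.le)).2
      have hv := (hsub (right_mem_Icc.2 huv.le)).2
      rw [Real.ball_eq_Ioo] at hu hv
      linarith [hu.1, hv.2]
    have := sub_pos.2 (f.mono huv)
    gcongr

lemma exists_mul_sub_le_image_sub {δ : ℝ} (hδ : 0 < δ) :
    ∃ η > 0, ∀ u v, u + δ ≤ v → η * (v - u) ≤ f.F v - f.F u := by
  have hper : Function.Periodic (fun x => f.F (x + δ) - f.F x) 1 := fun x => by
    simp only [add_right_comm x 1 δ, f.deg1, add_sub_add_right_eq_sub]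
  have hF := f.smooth.continuous
  obtain ⟨z, hz⟩ : ∃ z, ∀ x, f.F (z + δ) - f.F z ≤ f.F (x + δ) - f.F x := by
    obtain ⟨_, ⟨⟨z, rfl⟩, hz⟩⟩ := (hper.compact_of_continuous one_ne_zero
      (by fun_prop)).exists_isLeast (range_nonempty _)
    exact ⟨z, fun x => hz (mem_range_self x)⟩
  have hpos : 0 < f.F (z + δ) - f.F z := sub_pos.2 (f.mono (by linarith))
  refine ⟨min (f.F (z + δ) - f.F z) (1 / 2), lt_min hpos one_half_pos, fun u v huv => ?_⟩
  rcases le_or_gt (v - u) 1 with hshort | hlong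
  · calc _ ≤ (f.F (z + δ) - f.F z) * 1 :=
          mul_le_mul (min_le_left _ _) hshort (by linarith) hpos.le
      _ ≤ f.F v - f.F u := by linarith [hz u, f.mono.monotone huv]
  · have hturns : f.F u + ⌊v - u⌋ ≤ f.F v := by
      rw [← f.map_add_int]
      exact f.mono.monotone (by linarith [Int.floor_le (v - u)])
    have hfloor : (1 : ℝ) ≤ ⌊v - u⌋ := by exact_mod_cast Int.le_floor.2 (by exact_mod_cast hlong.le)
    calc _ ≤ 1 / 2 * (v - u) := mul_le_mul_of_nonneg_right (min_le_right _ _) (by linarith)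
      _ ≤ f.F v - f.F u := by linarith [Int.lt_floor_add_one (v - u)]

lemma exists_derivLeSlope : ∃ K, 1 ≤ K ∧ ∀ u v, u < v → DerivLeSlope f.F K u v := by
  obtain ⟨δ, hδ, K, hshort⟩ := f.exists_derivLeSlope_short
  obtain ⟨η, hη, hlong⟩ := f.exists_mul_sub_le_image_sub hδ
  obtain ⟨A, hA⟩ : BddAbove (range (deriv f.F)) := by
    refine (Function.Periodic.compact_of_continuous (c := 1) (fun x => ?_) one_ne_zero
      f.continuous_deriv).bddAbove
    exact_mod_cast f.deriv_add_int x 1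
  have hA (t : ℝ) : deriv f.F t ≤ A := hA (mem_range_self t)
  have hA₀ : 0 ≤ A := f.mono.monotone.deriv_nonneg.trans (hA 0)
  refine ⟨max 1 (max K (A / η)), le_max_left _ _, fun u v huv t ht => ?_⟩
  have hFuv := (sub_pos.2 (f.mono huv)).le
  rcases lt_or_ge v (u + δ) with hv | hv
  · exact (hshort u v huv hv t ht).trans (mul_le_mul_of_nonneg_right (by simp) hFuv)
  · calc deriv f.F t * (v - u) ≤ A * (v - u) :=
          mul_le_mul_of_nonneg_right (hA t) (sub_pos.2 huv).le
      _ = A / η * (η * (v - u)) := by field_simp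
      _ ≤ A / η * (f.F v - f.F u) := mul_le_mul_of_nonneg_left (hlong u v hv) (by positivity)
      _ ≤ _ := mul_le_mul_of_nonneg_right (by simp) hFuv

lemma exists_crossRatio_comp_le : ∃ K, 1 ≤ K ∧ ∀ a b c d, a < b → b < c → c < d →
    crossRatio (f.F a) (f.F b) (f.F c) (f.F d) ≤ K * crossRatio a b c d := by
  obtain ⟨K, hK, h⟩ := f.exists_derivLeSlope
  exact ⟨K * K, one_le_mul_of_one_le_of_one_le hK hK, fun a b c d hab hbc hcd =>
    crossRatio_comp_le_of_derivLeSlope f.differentiable f.mono hab hbc hcd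
      (h a c (hab.trans hbc)) (h b d (hbc.trans hcd))⟩

/-- Length measure plus a unit mass at each critical point. Its multiples bound the distortion of
cross-ratios: the atoms account for the bounded loss at the critical points, and the length for the
smooth distortion away from them. -/
def arcMeasure : Measure UnitAddCircle :=
  volume + ∑ i, Measure.dirac (f.c i : UnitAddCircle)

instance : IsFiniteMeasure f.arcMeasure := by
  unfold arcMeasure
  infer_instance

lemma min_one_le_arcMeasure (u v : ℝ) :
    min 1 (v - u) ≤ f.arcMeasure.real (((↑) : ℝ → UnitAddCircle) '' Icc u v) :=
  (ENNReal.ofReal_le_iff_le_toReal (measure_ne_top _ _)).1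
    ((min_one_le_volume_coe_image_Icc u v).trans (Measure.le_add_right le_rfl _))

lemma one_le_arcMeasure {i : Fin f.N} {u v : ℝ} (hi : f.c i ∈ Icc u v) :
    1 ≤ f.arcMeasure.real (((↑) : ℝ → UnitAddCircle) '' Icc u v) := by
  have hdirac : Measure.dirac (f.c i : UnitAddCircle) ≤ f.arcMeasure :=
    Measure.le_add_left (Finset.single_le_sum
      (f := fun i => Measure.dirac (f.c i : UnitAddCircle)) (fun _ _ => Measure.zero_le _)
      (Finset.mem_univ i))
  refine (ENNReal.ofReal_le_iff_le_toReal (measure_ne_top _ _)).1 (le_trans ?_ (hdirac _))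
  rw [ENNReal.ofReal_one, Measure.dirac_apply_of_mem (mem_image_of_mem _ hi)]

/-- With outermost points `u` and `v`, cross-ratios are increased by `f` by a factor which is at
most the exponential of `L` times the mass of the arc from `u` to `v`. -/
def DistortionLeArcMeasure (L u v : ℝ) : Prop :=
  ∀ ⦃b c⦄, u < b → b < c → c < v → crossRatio (f.F u) (f.F b) (f.F c) (f.F v) ≤
    Real.exp (L * f.arcMeasure.real (((↑) : ℝ → UnitAddCircle) '' Icc u v)) * crossRatio u b c v

variable {f}

lemma DistortionLeArcMeasure.mono {L L' u v : ℝ} (hL : L ≤ L')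
    (h : f.DistortionLeArcMeasure L u v) : f.DistortionLeArcMeasure L' u v :=
  fun _ _ hub hbc hcv => (h hub hbc hcv).trans (mul_le_mul_of_nonneg_right
    (Real.exp_le_exp.2 (mul_le_mul_of_nonneg_right hL measureReal_nonneg))
    (crossRatio_pos hub hbc hcv).le)

lemma DistortionLeArcMeasure.add_int {L u v : ℝ} (h : f.DistortionLeArcMeasure L u v) (k : ℤ) :
    f.DistortionLeArcMeasure L (u + k) (v + k) := by
  intro b c hub hbc hcv
  have := h (b := b - k) (c := c - k) (by linarith) (by linarith) (by linarith)
  rw [← crossRatio_add_right _ _ _ _ (k : ℝ), ← crossRatio_add_right u _ _ _ (k : ℝ)] at this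
  simpa only [coe_image_Icc_add_int, ← f.map_add_int, sub_add_cancel] using this

variable (f)

lemma locallyUniform_distortionLeArcMeasure_crit (i : Fin f.N) :
    LocallyUniform f.DistortionLeArcMeasure (f.c i) := by
  obtain ⟨K, hK, hcr⟩ := f.exists_crossRatio_comp_le
  have hlogK := Real.log_nonneg hK
  refine ⟨f.W i, (f.W_open i).mem_nhds (f.c_mem_W i), Real.log K,
    fun u v _ hsub b c hub hbc hcv => ?_⟩
  have hpos := (crossRatio_pos hub hbc hcv).le
  by_cases hi : f.c i ∈ Icc u v
  · refine (hcr u b c v hub hbc hcv).trans (mul_le_mul_of_nonneg_right ?_ hpos)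
    rw [← Real.log_le_iff_le_exp (one_pos.trans_le hK)]
    exact le_mul_of_one_le_right hlogK (f.one_le_arcMeasure hi)
  · have hne {t : ℝ} (ht : t ∈ Icc u v) : t ≠ f.c i := fun h => hi (h ▸ ht)
    refine (crossRatio_comp_le_of_schwarzianDeriv_nonpos hub hbc hcv
      (fun _ _ => f.smooth.contDiffAt) (fun t ht => ?_)
      fun t ht => (f.negSchwarzian i t (hsub ht) (hne ht)).le).trans ?_
    · have := (f.powerLaw i t (hsub ht) (hne ht)).1
      exact this.trans_le' (mul_nonneg (f.al_pos i).le (by positivity))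
    · exact le_mul_of_one_le_left hpos
        (Real.one_le_exp (mul_nonneg hlogK measureReal_nonneg))

lemma locallyUniform_distortionLeArcMeasure_of_deriv_pos {x : ℝ} (hx : 0 < deriv f.F x) :
    LocallyUniform f.DistortionLeArcMeasure x := by
  obtain ⟨U, hU, L, hL, h⟩ := f.exists_derivLeSlope_exp hx
  refine ⟨U ∩ Metric.ball x (1 / 2), inter_mem hU (Metric.ball_mem_nhds x one_half_pos), 2 * L,
    fun u v huv hsub b c hub hbc hcv => ?_⟩
  have hlen : v - u ≤ 1 := by
    have hu := (hsub (left_mem_Icc.2 huv.le)).2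
    have hv := (hsub (right_mem_Icc.2 huv.le)).2
    rw [Real.ball_eq_Ioo] at hu hv
    linarith [hu.1, hv.2]
  have hmass := f.min_one_le_arcMeasure u v
  rw [min_eq_right hlen] at hmass
  have hsubU := hsub.trans inter_subset_left
  refine (crossRatio_comp_le_of_derivLeSlope f.differentiable f.mono hub hbc hcv
    (h u c (hub.trans hbc) ((Icc_subset_Icc_right hcv.le).trans hsubU))
    (h b v (hbc.trans hcv) ((Icc_subset_Icc_left hub.le).trans hsubU))).trans
    (mul_le_mul_of_nonneg_right ?_ (crossRatio_pos hub hbc hcv).le)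
  rw [← Real.exp_add, Real.exp_le_exp]
  calc L * (c - u) + L * (v - b) = L * ((c - u) + (v - b)) := by ring
    _ ≤ L * (2 * f.arcMeasure.real ((↑) '' Icc u v)) :=
        mul_le_mul_of_nonneg_left (by linarith) hL
    _ = 2 * L * f.arcMeasure.real ((↑) '' Icc u v) := by ring

lemma exists_distortionLeArcMeasure :
    ∃ L, 0 ≤ L ∧ ∀ u v, u < v → f.DistortionLeArcMeasure L u v := by
  obtain ⟨K, hK, hcr⟩ := f.exists_crossRatio_comp_le
  obtain ⟨δ, hδ, L, hshort⟩ := f.exists_forall_short (fun _ _ _ _ hL _ h => h.mono hL)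
    (fun _ _ _ k h => h.add_int k) f.locallyUniform_distortionLeArcMeasure_crit
    fun _ hx => f.locallyUniform_distortionLeArcMeasure_of_deriv_pos hx
  have hlogK := Real.log_nonneg hK
  have hδ₁ : 0 < min 1 δ := lt_min one_pos hδ
  refine ⟨max L (Real.log K / min 1 δ), le_max_of_le_right (by positivity), fun u v huv => ?_⟩
  rcases lt_or_ge v (u + δ) with hv | hv
  · exact (hshort u v huv hv).mono (le_max_left _ _)
  · refine DistortionLeArcMeasure.mono (le_max_right _ _) fun b c hub hbc hcv =>
      (hcr u b c v hub hbc hcv).trans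
        (mul_le_mul_of_nonneg_right ?_ (crossRatio_pos hub hbc hcv).le)
    rw [← Real.log_le_iff_le_exp (one_pos.trans_le hK)]
    calc Real.log K = Real.log K / min 1 δ * min 1 δ := (div_mul_cancel₀ _ hδ₁.ne').symm
      _ ≤ _ := mul_le_mul_of_nonneg_left
        ((min_le_min_left 1 (by linarith)).trans (f.min_one_le_arcMeasure u v)) (by positivity)

theorem exists_crossRatioDistortion :
    ∃ μ : Measure UnitAddCircle, IsFiniteMeasure μ ∧ CrossRatioDistortion f.toUnit μ := by
  obtain ⟨L, hL, h⟩ := f.exists_distortionLeArcMeasure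
  refine ⟨L.toNNReal • f.arcMeasure, inferInstance, fun a b c d hab hbc hcd => ?_⟩
  rw [measureReal_nnreal_smul_apply, Real.coe_toNNReal L hL]
  exact h a d (hab.trans (hbc.trans hcd)) hab hbc hcd

end MCM

lemma translationNumber_eq_of_hasRotationNumber {f : CircleDeg1Lift} {ρ : ℝ}
    (h : HasRotationNumber f ρ) : f.translationNumber = ρ :=
  f.translationNumber_eq_of_tendsto₀
    (by simpa only [HasRotationNumber, CircleDeg1Lift.coe_pow] using h)

theorem symmetric_intervals_comparable_general
    (f : CircleDeg1Liftˣ) {μ : Measure UnitAddCircle} [IsFiniteMeasure μ]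
    (hμ : CrossRatioDistortion f μ) (ρ : ℝ) (hirr : Irrational ρ) (hmem : ρ ∈ Set.Ioo (0 : ℝ) 1)
    (hrot : HasRotationNumber f ρ) :
    ∃ C₃ : ℝ, 1 < C₃ ∧ ∀ (n : ℕ) (x y : ℝ),
      f^[qDen ρ n] y - (pNum ρ n : ℝ) = x →
      C₃⁻¹ * |x - y| ≤ |f^[qDen ρ n] x - (pNum ρ n : ℝ) - x| ∧
        |f^[qDen ρ n] x - (pNum ρ n : ℝ) - x| ≤ C₃ * |x - y| := by
  obtain rfl := translationNumber_eq_of_hasRotationNumber hrot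
  set ρ := CircleDeg1Lift.translationNumber f
  refine ⟨(2 + 4 * distortionConst μ) ^ 2 * distortionConst μ, ?_, ?_⟩
  · have := one_le_distortionConst μ
    nlinarith
  rintro n x y rfl
  rw [inv_mul_le_iff₀ (by have := distortionConst_pos μ; positivity)]
  have hiter (z : ℝ) : f^[qDen ρ n] z - pNum ρ n = returnMap f (qDen ρ n) (pNum ρ n) z := by
    rw [returnMap_natCast_apply, Int.cast_natCast]
  simp only [hiter]
  rcases (qDen_mul_sub_pNum_ne_zero hirr hmem n).lt_or_gt with hneg | hpos
  · have hc := closestReturns_neg_qDen hirr hmem hneg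
    have hinv (z : ℝ) : returnMap f (-qDen ρ n) (-pNum ρ n)
        (returnMap f (qDen ρ n) (pNum ρ n) z) = z := by
      rw [returnMap_returnMap, neg_add_cancel, neg_add_cancel, returnMap_zero_zero]
    have hcomp := hc.gaps_comparable hirr hμ
      (returnMap f (qDen ρ n) (pNum ρ n) (returnMap f (qDen ρ n) (pNum ρ n) y))
    have hlt (z : ℝ) := lt_returnMap_self hc.pos (returnMap f (qDen ρ n) (pNum ρ n) z)
    simp only [hinv] at hcomp hlt
    rw [abs_sub_comm, abs_of_pos (sub_pos.2 (hlt _)), abs_sub_comm, abs_of_pos (sub_pos.2 (hlt _))]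
    exact hcomp
  · have hc := closestReturns_qDen hirr hmem hpos
    have hlt := lt_returnMap_self hc.pos
    rw [abs_of_pos (sub_pos.2 (hlt _)), abs_of_pos (sub_pos.2 (hlt _))]
    exact (hc.gaps_comparable hirr hμ y).symm

/-- **dynamically symmetric intervals are comparable.** There is `C₃ > 1`
depending only on `f` such that for all `n` and all `x`, the intervals with endpoints
`x, f^{q_n}(x)` and `x, f^{-q_n}(x)` have comparable lengths. On lifts: if
`F^[q_n] y - p_n = x` (i.e. `y` is the lift of `f^{-q_n}(x)` adjacent to `x`), then
`|f^{q_n}(x) - x| ≍ |x - y|`. -/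
theorem symmetric_intervals_comparable
    (f : MCM) (ρ : ℝ) (hirr : Irrational ρ) (hmem : ρ ∈ Set.Ioo (0 : ℝ) 1)
    (hrot : HasRotationNumber f.F ρ) :
    ∃ C₃ : ℝ, 1 < C₃ ∧ ∀ (n : ℕ) (x y : ℝ),
      f.F^[qDen ρ n] y - (pNum ρ n : ℝ) = x →
      C₃⁻¹ * |x - y| ≤ |f.F^[qDen ρ n] x - (pNum ρ n : ℝ) - x| ∧
        |f.F^[qDen ρ n] x - (pNum ρ n : ℝ) - x| ≤ C₃ * |x - y| := by
  obtain ⟨μ, _, hμ⟩ := f.exists_crossRatioDistortion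
  exact symmetric_intervals_comparable_general f.toUnit hμ ρ hirr hmem hrot
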